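/- arXiv:2210.13644 — 2 statements merged into one kernel-verified Lean document; each statement's English description precedes it below -/
import Mathlib

section
/- Let (m₁,m₂,m₃,ξ,p) be a collision solution of the reduced two-body system on [t₀, t*) with t* < ∞ and ξ(t) → +∞ as t → t*⁻. Then 2m₃ξ − m₂ decays at least like ξ^{−1/2}: there exist M > 0 and t₁ ∈ [t₀, t*) such that |2·m₃(t)·ξ(t) − m₂(t)| · √(ξ(t)) ≤ M for all t ∈ [t₁, t*). -/
open Filter Set

lemma aux_mono {f f' : ℝ → ℝ} {a b : ℝ}
    (h : ∀ t ∈ Set.Ico a b, HasDerivAt f (f' t) t) (h0 : ∀ t ∈ Set.Ico a b, 0 ≤ f' t) :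
    MonotoneOn f (Set.Ico a b) := by
  apply monotoneOn_of_deriv_nonneg (convex_Ico a b)
  · exact fun x hx => (h x hx).continuousAt.continuousWithinAt
  · exact fun x hx => (h x (interior_subset hx)).differentiableAt.differentiableWithinAt
  · intro x hx
    rw [(h x (interior_subset hx)).deriv]
    exact h0 x (interior_subset hx)

lemma aux_const {f f' : ℝ → ℝ} {a b : ℝ}
    (h : ∀ t ∈ Set.Ico a b, HasDerivAt f (f' t) t) (h0 : ∀ t ∈ Set.Ico a b, f' t = 0) :
    ∀ t ∈ Set.Ico a b, f t = f a := by
  intro t ht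
  have ha : a ∈ Set.Ico a b := ⟨le_rfl, ht.1.trans_lt ht.2⟩
  have h1 := aux_mono h (fun t ht => (h0 t ht).ge) ha ht ht.1
  have h2 := aux_mono (f := fun t => - f t) (fun t ht => (h t ht).neg)
    (fun t ht => by simp [h0 t ht]) ha ht ht.1
  simp only at h2
  linarith

/-- positivity of the derivative of u at its zeros -/
lemma aux_upos {B m2 m3 x w : ℝ} (hx : 2 ≤ x) (hB : 100 * B ^ 2 ≤ x)
    (h2 : m2 ^ 2 ≤ B ^ 2) (h3 : m3 ^ 2 ≤ B ^ 2) (hw : w = 2 * m3 * x - m2)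
    (hw1 : 3 * x ≤ w ^ 2) (hw2 : w ^ 2 ≤ 5 * x) :
    0 < 2 * (-(x^2+1) * (1 + m2 * m3 - 2 * m3^2 * x))
      - x * (-m2^2 + m3^2 + 2 * m2 * m3 * x) := by
  have key : x * (2 * (-(x^2+1) * (1 + m2 * m3 - 2 * m3^2 * x))
      - x * (-m2^2 + m3^2 + 2 * m2 * m3 * x)) =
      (x^2+1) * (w^2 - 2 * x) + m2 * w - x^2 * m3^2 := by
    subst hw; ring
  have h5 : -(3 * x) ≤ m2 * w := by nlinarith [sq_nonneg (m2 + w)]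
  have h6 : x^2 * m3^2 ≤ x^2 * (x / 100) := by
    apply mul_le_mul_of_nonneg_left _ (sq_nonneg x); linarith
  have h7 : (x^2+1) * x ≤ (x^2+1) * (w^2 - 2 * x) := by
    apply mul_le_mul_of_nonneg_left _ (by positivity); linarith
  have h8 : 0 < x * (2 * (-(x^2+1) * (1 + m2 * m3 - 2 * m3^2 * x))
      - x * (-m2^2 + m3^2 + 2 * m2 * m3 * x)) := by
    rw [key]; nlinarith [mul_pos (show 0 < x by linarith) (show 0 < x by linarith),
      mul_le_mul hx hx (by norm_num) (by linarith)]
  exact pos_of_mul_pos_right h8 (by linarith)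

lemma aux_m3 {B m2 m3 x w : ℝ} (hx : 2 ≤ x) (hB : 100 * B ^ 2 ≤ x) 
    (h2 : m2 ^ 2 ≤ B ^ 2) (hw : w = 2 * m3 * x - m2) (hw2 : w ^ 2 ≤ 5 * x) :
    |w| ≤ 3 * √x ∧ |m3| ≤ 2 / √x := by
  have hx0 : 0 < x := by linarith
  have hs : 0 < √x := Real.sqrt_pos.2 hx0
  have hss : √x ^ 2 = x := Real.sq_sqrt hx0.le
  have a1 : |w| ≤ 3 * √x := abs_le_of_sq_le_sq (by nlinarith) (by positivity)
  have a2 : |m2| ≤ √x := abs_le_of_sq_le_sq (by nlinarith) (by positivity)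
  refine ⟨a1, ?_⟩
  have e : 2 * |m3| * x ≤ 4 * √x := by
    calc 2 * |m3| * x = |w + m2| := by
          rw [hw, sub_add_cancel, abs_mul, abs_mul, abs_of_pos hx0]; norm_num
      _ ≤ |w| + |m2| := abs_add_le _ _
      _ ≤ _ := by linarith
  rw [le_div_iff₀ hs]
  have : (|m3| * √x) * √x ≤ 2 * √x := by nlinarith
  exact le_of_mul_le_mul_right this hs

/-- bound for the derivative of y -/
lemma aux_dy {B m1 m3 x w u σ c : ℝ} (hB0 : 0 ≤ B) (hx : 2 ≤ x) (hu : u ≤ 0)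
    (hσ : |σ| ≤ 1) (h1 : |m1| ≤ B) (hw : |w| ≤ 3 * √x) (h3 : |m3| ≤ 2 / √x)
    (hc : 1 / (√x * x) ≤ c) :
    0 ≤ σ * (u * w / x^2 - 3 / 2 * m3 * u / x + m1 * m3 / (2 * x))
      + 6 * (-(x^2+1) * u) / x^3 + B * c := by
  have hx0 : 0 < x := by linarith
  have hs : 0 < √x := Real.sqrt_pos.2 hx0
  have hss : √x ^ 2 = x := Real.sq_sqrt hx0.le
  have hs1 : 1 ≤ √x := by rw [Real.one_le_sqrt]; linarith
  have hsx : √x ≤ x := by nlinarith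
  have hm32 : |m3| ≤ 2 := h3.trans (by rw [div_le_iff₀ hs]; linarith)
  have hau : |u| = -u := abs_of_nonpos hu
  have e1 : |u * w / x^2| ≤ 3 * (-u / x) := by
    rw [abs_div, abs_mul, hau, abs_of_pos (by positivity : 0 < x^2), div_le_iff₀ (by positivity)]
    have : 3 * (-u / x) * x^2 = -u * (3 * x) := by field_simp
    rw [this]
    exact mul_le_mul_of_nonneg_left (by linarith) (by linarith)
  have e2 : |3 / 2 * m3 * u / x| ≤ 3 * (-u / x) := by
    rw [abs_div, abs_mul, abs_mul, hau, abs_of_pos hx0, div_le_iff₀ hx0]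
    have : 3 * (-u / x) * x = 3 * (-u) := by field_simp
    rw [this]
    apply mul_le_mul_of_nonneg_right _ (by linarith)
    rw [abs_of_pos (by norm_num : (0:ℝ) < 3/2)]; linarith
  have e3 : |m1 * m3 / (2 * x)| ≤ B * c := by
    calc |m1 * m3 / (2 * x)| = |m1| * |m3| / (2 * x) := by
          rw [abs_div, abs_mul, abs_of_pos (by positivity : 0 < 2 * x)]
      _ ≤ B * (2 / √x) / (2 * x) := by gcongr
      _ = B * (1 / (√x * x)) := by field_simp
      _ ≤ B * c := by gcongr
  have e4 : 6 * (-u / x) ≤ 6 * (-(x^2+1) * u) / x^3 := by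
    have : 6 * (-(x^2+1) * u) / x^3 = 6 * (-u / x) + 6 * (-u) / x^3 := by field_simp; ring
    rw [this]
    have : 0 ≤ 6 * (-u) / x^3 := div_nonneg (by linarith) (by positivity)
    linarith
  set Y := u * w / x^2 - 3 / 2 * m3 * u / x + m1 * m3 / (2 * x) with hY
  have e5 : |Y| ≤ 6 * (-u / x) + B * c := by
    have := abs_le.1 e1
    have := abs_le.1 e2
    have := abs_le.1 e3
    rw [abs_le]; constructor <;> rw [hY] <;> linarith
  have e6 : |σ * Y| ≤ |Y| := by
    rw [abs_mul]; exact mul_le_of_le_one_left (abs_nonneg _) hσ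
  have := neg_abs_le (σ * Y)
  linarith

/-- Along a collision solution with `t* < ∞` and `ξ(t) → +∞` as `t → t*⁻`, the
quantity `2m₃ξ − m₂` decays at least like `ξ^(−1/2)`: there are `M > 0` and
`t₁ ∈ [t₀, t*)` with `|2m₃(t)ξ(t) − m₂(t)|·√(ξ(t)) ≤ M` on `[t₁, t*)`. -/
theorem two_m3_xi_sub_m2_estimate
    (t0 tstar : ℝ) (ht0 : t0 < tstar)
    (m1 m2 m3 xi p : ℝ → ℝ)
    (hm1 : ∀ t ∈ Set.Ico t0 tstar,
      HasDerivAt m1 (xi t * (-(m2 t)^2 + (m3 t)^2 + 2 * m2 t * m3 t * xi t)) t)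
    (hm2 : ∀ t ∈ Set.Ico t0 tstar,
      HasDerivAt m2 (m1 t * m2 t * xi t - m3 t * p t - 2 * m1 t * m3 t * (xi t)^2) t)
    (hm3 : ∀ t ∈ Set.Ico t0 tstar,
      HasDerivAt m3 (m2 t * p t - m1 t * m3 t * xi t) t)
    (hxi : ∀ t ∈ Set.Ico t0 tstar,
      HasDerivAt xi (-((xi t)^2 + 1) * (2 * p t - m1 t)) t)
    (hp : ∀ t ∈ Set.Ico t0 tstar,
      HasDerivAt p (-((xi t)^2 + 1) * (1 + m2 t * m3 t - 2 * (m3 t)^2 * xi t)) t)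
    (hcoll : Tendsto xi (nhdsWithin tstar (Set.Iio tstar)) atTop) :
    ∃ M > (0 : ℝ), ∃ t1 ∈ Set.Ico t0 tstar,
      ∀ t ∈ Set.Ico t1 tstar,
        |2 * m3 t * xi t - m2 t| * Real.sqrt (xi t) ≤ M := by
  have ht00 : t0 ∈ Set.Ico t0 tstar := ⟨le_rfl, ht0⟩
  -- conserved quantities
  have hC := aux_const (f := fun t => m1 t ^ 2 + m2 t ^ 2 + m3 t ^ 2)
    (fun t ht => (((hm1 t ht).pow 2).add ((hm2 t ht).pow 2)).add ((hm3 t ht).pow 2))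
    (fun t ht => by norm_num; ring)
  have hH := aux_const
    (f := fun t => p t ^ 2 - m1 t * p t - xi t - m2 t * m3 t * xi t + m3 t ^ 2 * xi t ^ 2)
    (fun t ht => (((((hp t ht).pow 2).sub ((hm1 t ht).mul (hp t ht))).sub (hxi t ht)).sub
      (((hm2 t ht).mul (hm3 t ht)).mul (hxi t ht))).add
      (((hm3 t ht).pow 2).mul ((hxi t ht).pow 2)))
    (fun t ht => by norm_num; ring)
  generalize m1 t0 ^ 2 + m2 t0 ^ 2 + m3 t0 ^ 2 = C at hC
  generalize p t0 ^ 2 - m1 t0 * p t0 - xi t0 - m2 t0 * m3 t0 * xi t0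
    + m3 t0 ^ 2 * xi t0 ^ 2 = H at hH
  have hC0 : 0 ≤ C := by rw [← hC t0 ht00]; positivity
  obtain ⟨B, hBdef⟩ : ∃ B, B = C + 1 := ⟨_, rfl⟩
  have hB0 : 0 ≤ B := by linarith
  have hCB : C ≤ B ^ 2 := by rw [hBdef]; nlinarith
  have hb1 : ∀ t ∈ Set.Ico t0 tstar, m1 t ^ 2 ≤ B ^ 2 := fun t ht => by
    have := hC t ht; nlinarith [sq_nonneg (m2 t), sq_nonneg (m3 t)]
  have hb2 : ∀ t ∈ Set.Ico t0 tstar, m2 t ^ 2 ≤ B ^ 2 := fun t ht => by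
    have := hC t ht; nlinarith [sq_nonneg (m1 t), sq_nonneg (m3 t)]
  have hb3 : ∀ t ∈ Set.Ico t0 tstar, m3 t ^ 2 ≤ B ^ 2 := fun t ht => by
    have := hC t ht; nlinarith [sq_nonneg (m2 t), sq_nonneg (m1 t)]
  -- a time after which xi is large
  obtain ⟨R, hR⟩ : ∃ R, R = 2 + 4 * |H| + C + 100 * B ^ 2 := ⟨_, rfl⟩
  obtain ⟨T, hT, hTR⟩ : ∃ T ∈ Set.Ico t0 tstar, ∀ t ∈ Set.Ico T tstar, R ≤ xi t := by
    have h := hcoll.eventually_ge_atTop R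
    obtain ⟨l, hl, hl2⟩ := (mem_nhdsLT_iff_exists_Ioo_subset' ht0).1 h
    refine ⟨max t0 ((l + tstar) / 2), ⟨le_max_left _ _, max_lt ht0 ?_⟩, fun t ht => hl2 ⟨?_, ht.2⟩⟩
    · have : l < tstar := hl
      linarith
    · have : l < tstar := hl
      have := (le_max_right t0 ((l + tstar) / 2)).trans ht.1
      linarith
  have hsub : ∀ t ∈ Set.Ico T tstar, t ∈ Set.Ico t0 tstar := fun t ht => ⟨hT.1.trans ht.1, ht.2⟩
  have hx2 : ∀ t ∈ Set.Ico T tstar, 2 ≤ xi t := fun t ht => by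
    have := hTR t ht; nlinarith [abs_nonneg H, sq_nonneg B]
  have hxB : ∀ t ∈ Set.Ico T tstar, 100 * B ^ 2 ≤ xi t := fun t ht => by
    have := hTR t ht; nlinarith [abs_nonneg H, sq_nonneg B]
  have hE : ∀ t ∈ Set.Ico T tstar,
      |(2 * p t - m1 t) ^ 2 + (2 * m3 t * xi t - m2 t) ^ 2 - 4 * xi t| ≤ xi t := fun t ht => by
    have h1 := hC t (hsub t ht)
    have h2 := hH t (hsub t ht)
    have h3 : (2 * p t - m1 t) ^ 2 + (2 * m3 t * xi t - m2 t) ^ 2 - 4 * xi t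
      = 4 * H + m1 t ^ 2 + m2 t ^ 2 := by rw [← h2]; ring
    have h4 := hTR t ht
    have := abs_le.1 (le_refl |H|)
    rw [h3, abs_le]
    constructor <;> nlinarith [sq_nonneg (m1 t), sq_nonneg (m2 t), sq_nonneg (m3 t), sq_nonneg B]
  have hw5 : ∀ t ∈ Set.Ico T tstar, (2 * m3 t * xi t - m2 t) ^ 2 ≤ 5 * xi t := fun t ht => by
    have := (abs_le.1 (hE t ht)).2
    nlinarith [sq_nonneg (2 * p t - m1 t)]
  -- u < 0
  have hdu : ∀ t ∈ Set.Ico t0 tstar, HasDerivAt (fun t => -(2 * p t - m1 t)) _ t :=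
    fun t ht => (((hp t ht).const_mul 2).sub (hm1 t ht)).neg
  have hu : ∀ t ∈ Set.Ico T tstar, 2 * p t - m1 t ≤ 0 := by
    intro s hs
    by_contra hpos
    push Not at hpos
    have hup : ∀ t ∈ Set.Ico s tstar, 0 ≤ 2 * p t - m1 t := by
      intro t ht
      have hin : ∀ r ∈ Set.Icc s t, r ∈ Set.Ico T tstar :=
        fun r hr => ⟨hs.1.trans hr.1, hr.2.trans_lt ht.2⟩
      have := image_le_of_deriv_right_lt_deriv_boundary (a := s) (b := t)
        (f := fun t => -(2 * p t - m1 t)) (B := fun _ => 0) (B' := fun _ => 0)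
        (fun r hr => (hdu r (hsub r (hin r hr))).continuousAt.continuousWithinAt)
        (fun r hr => (hdu r (hsub r (hin r (Ico_subset_Icc_self hr)))).hasDerivWithinAt)
        (by linarith) (fun x => hasDerivAt_const x 0)
        (fun r hr h0 => by
          have hr' := hin r (Ico_subset_Icc_self hr)
          have hu0 : 2 * p r - m1 r = 0 := by linarith
          have hEr := (abs_le.1 (hE r hr')).1
          rw [hu0] at hEr
          have := aux_upos (hx2 r hr') (hxB r hr') (hb2 r (hsub r hr')) (hb3 r (hsub r hr'))
            rfl (by linarith) (hw5 r hr')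
          linarith)
        (right_mem_Icc.2 ht.1)
      linarith
    have hanti := aux_mono (f := fun t => - xi t) (a := s) (b := tstar)
      (fun t ht => (hxi t (hsub t ⟨hs.1.trans ht.1, ht.2⟩)).neg)
      (fun t ht => by
        have := mul_nonneg (show 0 ≤ xi t ^ 2 + 1 by positivity) (hup t ht)
        linarith)
    have h1 := hcoll.eventually_gt_atTop (xi s)
    have h2 : ∀ᶠ t in nhdsWithin tstar (Set.Iio tstar), t ∈ Set.Ico s tstar :=
      Ico_mem_nhdsLT hs.2
    obtain ⟨t, h3, h4⟩ := (h1.and h2).exists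
    have := hanti ⟨le_rfl, hs.2⟩ h4 h4.1
    linarith
  have hmono : MonotoneOn xi (Set.Ico T tstar) := aux_mono
    (fun t ht => hxi t (hsub t ht))
    (fun t ht => by
      have := mul_nonneg (show 0 ≤ xi t ^ 2 + 1 by positivity) (neg_nonneg.2 (hu t ht))
      linarith)
  have hm3b := fun t ht => aux_m3 (m3 := m3 t) (hx2 t ht) (hxB t ht) (hb2 t (hsub t ht)) rfl
    (hw5 t ht)
  -- y tends to zero
  have hev : ∀ᶠ t in nhdsWithin tstar (Set.Iio tstar), t ∈ Set.Ico T tstar :=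
    Ico_mem_nhdsLT hT.2
  have hy0 : Tendsto (fun t => (2 * m3 t * xi t - m2 t) / xi t)
      (nhdsWithin tstar (Set.Iio tstar)) (nhds 0) := by
    have hsq : Tendsto (fun t => 3 / √(xi t)) (nhdsWithin tstar (Set.Iio tstar)) (nhds 0) :=
      (Real.tendsto_sqrt_atTop.comp hcoll).const_div_atTop 3
    refine squeeze_zero_norm' ?_ hsq
    filter_upwards [hev] with t ht
    have hx0 : 0 < xi t := by linarith [hx2 t ht]
    have hs : 0 < √(xi t) := Real.sqrt_pos.2 hx0
    rw [Real.norm_eq_abs, abs_div, abs_of_pos hx0, div_le_div_iff₀ hx0 hs]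
    calc _ ≤ 3 * √(xi t) * √(xi t) := mul_le_mul_of_nonneg_right (hm3b t ht).1 hs.le
      _ = 3 * xi t := by rw [mul_assoc, Real.mul_self_sqrt hx0.le]
  have hinv : Tendsto (fun t => 3 / xi t ^ 2) (nhdsWithin tstar (Set.Iio tstar)) (nhds 0) :=
    ((tendsto_pow_atTop two_ne_zero).comp hcoll).const_div_atTop 3
  have hmain : ∀ σ : ℝ, |σ| ≤ 1 → ∀ t ∈ Set.Ico T tstar,
      σ * ((2 * m3 t * xi t - m2 t) / xi t) ≤
        3 / xi t ^ 2 + B * (1 / (√(xi t) * xi t)) * (tstar - t) := by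
    intro σ hσ t ht
    obtain ⟨c, hc⟩ : ∃ c, c = 1 / (√(xi t) * xi t) := ⟨_, rfl⟩
    have hin : ∀ s ∈ Set.Ico t tstar, s ∈ Set.Ico T tstar :=
      fun s hs => ⟨ht.1.trans hs.1, hs.2⟩
    have hG := aux_mono (a := t) (b := tstar)
      (f := fun s => σ * ((2 * m3 s * xi s - m2 s) / xi s) - 3 / xi s ^ 2 + B * c * s)
      (f' := fun s => σ * ((2 * p s - m1 s) * (2 * m3 s * xi s - m2 s) / xi s ^2
        - 3 / 2 * m3 s * (2 * p s - m1 s) / xi s + m1 s * m3 s / (2 * xi s))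
        + 6 * (-(xi s ^2+1) * (2 * p s - m1 s)) / xi s ^3 + B * c)
      (fun s hs => by
        have hs' := hin s hs
        have hs0 := hsub s hs'
        have hx0 : xi s ≠ 0 := by linarith [hx2 s hs']
        have hd := (((((((hm3 s hs0).const_mul 2).mul (hxi s hs0)).sub (hm2 s hs0)).div
          (hxi s hs0) hx0).const_mul σ).sub
          ((hasDerivAt_const s (3:ℝ)).div ((hxi s hs0).pow 2) (pow_ne_zero 2 hx0))).add
          ((hasDerivAt_id s).const_mul (B * c))
        refine hd.congr_deriv ?_
        simp
        field_simp
        ring)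
      (fun s hs => by
        have hs' := hin s hs
        have hle : xi t ≤ xi s := hmono ht hs' hs.1
        have h2 := hx2 t ht
        have hst : 0 < √(xi t) := Real.sqrt_pos.2 (by linarith)
        refine aux_dy hB0 (hx2 s hs') (hu s hs') hσ (abs_le_of_sq_le_sq (hb1 s (hsub s hs')) hB0)
          (hm3b s hs').1 (hm3b s hs').2 ?_
        rw [hc]
        have := Real.sqrt_le_sqrt hle
        gcongr)
    have hid : Tendsto (fun s : ℝ => s) (nhdsWithin tstar (Set.Iio tstar)) (nhds tstar) :=
      tendsto_id.mono_left nhdsWithin_le_nhds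
    have hlim := ((hy0.const_mul σ).sub hinv).add (hid.const_mul (B * c))
    have hge := ge_of_tendsto hlim (b := σ * ((2 * m3 t * xi t - m2 t) / xi t)
        - 3 / xi t ^ 2 + B * c * t) (by
      have h2 : ∀ᶠ s in nhdsWithin tstar (Set.Iio tstar), s ∈ Set.Ico t tstar :=
        Ico_mem_nhdsLT ht.2
      filter_upwards [h2] with s hs
      exact hG ⟨le_rfl, ht.2⟩ hs hs.1)
    rw [← hc]
    linarith
  refine ⟨3 + B * (tstar - t0), by nlinarith, T, hT, fun t ht => ?_⟩
  have h2 := hx2 t ht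
  have hx0 : 0 < xi t := by linarith
  have hs : 0 < √(xi t) := Real.sqrt_pos.2 hx0
  have hss : √(xi t) ^ 2 = xi t := Real.sq_sqrt hx0.le
  have hs1 : 1 ≤ √(xi t) := by rw [Real.one_le_sqrt]; linarith
  have hab : |(2 * m3 t * xi t - m2 t) / xi t| ≤
      3 / xi t ^ 2 + B * (1 / (√(xi t) * xi t)) * (tstar - t) := by
    have ha := hmain 1 (by norm_num) t ht
    have hb := hmain (-1) (by norm_num) t ht
    rw [abs_le]; constructor <;> linarith
  rw [abs_div, abs_of_pos hx0, div_le_iff₀ hx0] at hab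
  calc _ ≤ (3 / xi t ^ 2 + B * (1 / (√(xi t) * xi t)) * (tstar - t)) * xi t * √(xi t) :=
        mul_le_mul_of_nonneg_right hab hs.le
    _ = 3 * (√(xi t) / xi t) + B * (tstar - t) := by field_simp
    _ ≤ 3 * 1 + B * (tstar - t0) := by
        have : √(xi t) / xi t ≤ 1 := by rw [div_le_one hx0]; nlinarith
        have h3 := (hsub t ht).1
        gcongr
    _ = _ := by ring
end

section
/- The omega-limit set of a collision trajectory is a singleton: if (m₁,m₂,m₃,ξ,p) is a collision solution of the reduced two-body system on [t₀, t*) with t* < ∞ and ξ(t) → +∞ as t → t*⁻, and c is the conserved Casimir value, then there exist real numbers m₁*, m₂* with (m₁*)² + (m₂*)² = c such that m₁(t) → m₁*, m₂(t) → m₂*, and m₃(t) → 0 as t → t*⁻. -/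
open Filter Set


lemma aux_anti {T b : ℝ} {f f' : ℝ → ℝ} (hf : ∀ t ∈ Set.Ico T b, HasDerivAt f (f' t) t)
    (h0 : ∀ t ∈ Set.Ico T b, f' t ≤ 0) : AntitoneOn f (Set.Ico T b) := by
  apply antitoneOn_of_deriv_nonpos (convex_Ico T b)
  · exact fun t ht => (hf t ht).continuousAt.continuousWithinAt
  · exact fun t ht => (hf t (interior_subset ht)).differentiableAt.differentiableWithinAt
  · intro t ht
    rw [(hf t (interior_subset ht)).deriv]
    exact h0 t (interior_subset ht)

lemma aux_ev {T b : ℝ} (h : T < b) : ∀ᶠ t in nhdsWithin b (Set.Iio b), t ∈ Set.Ico T b :=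
  Filter.mem_of_superset (Ioo_mem_nhdsLT h) Set.Ioo_subset_Ico_self

lemma aux_ge {T b L : ℝ} {f f' : ℝ → ℝ} (hf : ∀ t ∈ Set.Ico T b, HasDerivAt f (f' t) t)
    (h0 : ∀ t ∈ Set.Ico T b, f' t ≤ 0) (hL : Tendsto f (nhdsWithin b (Set.Iio b)) (nhds L)) :
    ∀ t ∈ Set.Ico T b, L ≤ f t := by
  intro t ht
  have ha := aux_anti hf h0
  refine le_of_tendsto hL ?_
  filter_upwards [aux_ev ht.2] with s hs
  exact ha ht ⟨ht.1.trans hs.1, hs.2⟩ hs.1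

lemma aux_conv {T b B : ℝ} (hT : T < b) {f f' : ℝ → ℝ}
    (hf : ∀ t ∈ Set.Ico T b, HasDerivAt f (f' t) t)
    (h0 : ∀ t ∈ Set.Ico T b, f' t ≤ 0) (hB : ∀ t ∈ Set.Ico T b, B ≤ f t) :
    ∃ L, Tendsto f (nhdsWithin b (Set.Iio b)) (nhds L) := by
  have ha := aux_anti hf h0
  refine ⟨sInf (f '' Set.Ico T b), ?_⟩
  have hbd : BddBelow (f '' Set.Ico T b) := ⟨B, by rintro _ ⟨t, ht, rfl⟩; exact hB t ht⟩
  have hne : (f '' Set.Ico T b).Nonempty := ⟨f T, T, ⟨le_refl _, hT⟩, rfl⟩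
  rw [tendsto_order]
  constructor
  · intro a haL
    filter_upwards [aux_ev hT] with s hs
    exact haL.trans_le (csInf_le hbd ⟨s, hs, rfl⟩)
  · intro a haL
    obtain ⟨_, ⟨t, ht, rfl⟩, hta⟩ := exists_lt_of_csInf_lt hne haL
    filter_upwards [aux_ev ht.2] with s hs
    exact (ha ht ⟨ht.1.trans hs.1, hs.2⟩ hs.1).trans_lt hta

lemma aux_u {E c m1 m2 m3 x p : ℝ}
    (hE : p^2 - m1 * p + (m3*x)^2 - m2 * (m3*x) - x = E)
    (hC : m1^2+m2^2+m3^2 = c) (hR : 256 * c + 8 * |E| + 1 ≤ x) :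
    p^2 + (m3*x)^2 ≤ 4 * x := by
  have := le_abs_self E
  have := abs_nonneg E
  nlinarith [sq_nonneg (p - m1), sq_nonneg (m3*x - m2), sq_nonneg m3, sq_nonneg m1, sq_nonneg m2]

lemma aux_g {E c m1 m2 m3 x p : ℝ}
    (hE : p^2 - m1 * p + (m3*x)^2 - m2 * (m3*x) - x = E)
    (hC : m1^2+m2^2+m3^2 = c) (hR : 256 * c + 8 * |E| + 1 ≤ x) :
    (1 + 1/x^2) * (-x - 2*E - m2*(m3*x) - m1^2/2) + (-m2^2+m3^2+2*m2*(m3*x))/2 ≤ - x/2 := by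
  have hu := aux_u hE hC hR
  have h1 := neg_abs_le E
  have h2 := abs_nonneg E
  have e1 := sq_nonneg m1
  have e2 := sq_nonneg m2
  have e3 := sq_nonneg m3
  have e4 := sq_nonneg p
  have hx : 0 < x := by linarith
  have k1 : m2*(m3*x) ≤ x/8 + 8*c := by nlinarith [sq_nonneg (m3*x - 16*m2)]
  have k2 : -(m2*(m3*x)) ≤ x/8 + 8*c := by nlinarith [sq_nonneg (m3*x + 16*m2)]
  have hb : (-x - 2*E - m2*(m3*x) - m1^2/2) ≤ 0 := by linarith
  have hA : 0 ≤ 1/x^2 := by positivity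
  have := mul_nonneg_of_nonpos_of_nonpos hb (neg_nonpos.2 hA)
  nlinarith

/-- The omega-limit set of a collision trajectory is a singleton: along a collision
solution with `t* < ∞`, `ξ(t) → +∞` as `t → t*⁻`, and conserved Casimir value `c`,
there are `m₁*, m₂*` with `(m₁*)² + (m₂*)² = c` such that `m₁(t) → m₁*`,
`m₂(t) → m₂*` and `m₃(t) → 0` as `t → t*⁻`. -/
theorem omega_limit_singleton
    (t0 tstar : ℝ) (ht0 : t0 < tstar)
    (m1 m2 m3 xi p : ℝ → ℝ) (c : ℝ)
    (hm1 : ∀ t ∈ Set.Ico t0 tstar,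
      HasDerivAt m1 (xi t * (-(m2 t)^2 + (m3 t)^2 + 2 * m2 t * m3 t * xi t)) t)
    (hm2 : ∀ t ∈ Set.Ico t0 tstar,
      HasDerivAt m2 (m1 t * m2 t * xi t - m3 t * p t - 2 * m1 t * m3 t * (xi t)^2) t)
    (hm3 : ∀ t ∈ Set.Ico t0 tstar,
      HasDerivAt m3 (m2 t * p t - m1 t * m3 t * xi t) t)
    (hxi : ∀ t ∈ Set.Ico t0 tstar,
      HasDerivAt xi (-((xi t)^2 + 1) * (2 * p t - m1 t)) t)
    (hp : ∀ t ∈ Set.Ico t0 tstar,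
      HasDerivAt p (-((xi t)^2 + 1) * (1 + m2 t * m3 t - 2 * (m3 t)^2 * xi t)) t)
    (hC : ∀ t ∈ Set.Ico t0 tstar, (m1 t)^2 + (m2 t)^2 + (m3 t)^2 = c)
    (hcoll : Tendsto xi (nhdsWithin tstar (Set.Iio tstar)) atTop) :
    ∃ m1s m2s : ℝ, m1s^2 + m2s^2 = c ∧
      Tendsto m1 (nhdsWithin tstar (Set.Iio tstar)) (nhds m1s) ∧
      Tendsto m2 (nhdsWithin tstar (Set.Iio tstar)) (nhds m2s) ∧
      Tendsto m3 (nhdsWithin tstar (Set.Iio tstar)) (nhds 0) := by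
  let E := (p t0)^2 - m1 t0 * p t0 + (m3 t0*xi t0)^2 - m2 t0 * (m3 t0*xi t0) - xi t0
  have hE : ∀ t ∈ Set.Ico t0 tstar,
      (p t)^2 - m1 t * p t + (m3 t*xi t)^2 - m2 t * (m3 t*xi t) - xi t = E := by
    have hd : ∀ t ∈ Set.Ico t0 tstar, HasDerivAt
        (fun t => (p t)^2 - m1 t * p t + (m3 t*xi t)^2 - m2 t * (m3 t*xi t) - xi t) 0 t := by
      intro t ht
      convert! (((((hp t ht).pow 2).sub ((hm1 t ht).mul (hp t ht))).add
        (((hm3 t ht).mul (hxi t ht)).pow 2)).sub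
        ((hm2 t ht).mul ((hm3 t ht).mul (hxi t ht)))).sub (hxi t ht) using 1
      simp only [Pi.mul_apply]
      push_cast
      ring
    have a1 := aux_anti hd (fun _ _ => le_refl _)
    have a2 := aux_anti (fun t ht => (hd t ht).neg) (fun _ _ => by simp)
    intro t ht
    have h0 : t0 ∈ Set.Ico t0 tstar := ⟨le_refl _, ht0⟩
    have b1 := a1 h0 ht ht.1
    have b2 := a2 h0 ht ht.1
    simp only [Pi.neg_apply, neg_le_neg_iff] at b1 b2
    exact le_antisymm b1 b2
  clear_value E
  obtain ⟨T, hT0, hTs, hTR⟩ : ∃ T, t0 ≤ T ∧ T < tstar ∧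
      ∀ t ∈ Set.Ico T tstar, 256 * c + 8 * |E| + 1 ≤ xi t := by
    have h1 := (hcoll.eventually_ge_atTop (256 * c + 8 * |E| + 1)).and (aux_ev ht0)
    obtain ⟨l, hl, hl2⟩ := (mem_nhdsLT_iff_exists_Ioo_subset).1 h1
    have hl' : l < tstar := hl
    refine ⟨(l + tstar)/2, ?_, by linarith, ?_⟩
    · exact (hl2 (show (l+tstar)/2 ∈ Set.Ioo l tstar from ⟨by linarith, by linarith⟩)).2.1
    · intro t ht
      exact (hl2 (show t ∈ Set.Ioo l tstar from ⟨by linarith [ht.1], ht.2⟩)).1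
  have hsub : ∀ t ∈ Set.Ico T tstar, t ∈ Set.Ico t0 tstar := fun t ht => ⟨hT0.trans ht.1, ht.2⟩
  have hc0 : 0 ≤ c := by
    rw [← hC t0 ⟨le_refl _, ht0⟩]; positivity
  have hx1 : ∀ t ∈ Set.Ico T tstar, 1 ≤ xi t := fun t ht => by
    have := hTR t ht
    have := abs_nonneg E
    linarith
  have hu : ∀ t ∈ Set.Ico T tstar, (p t)^2 + (m3 t * xi t)^2 ≤ 4 * xi t := fun t ht =>
    aux_u (hE t (hsub t ht)) (hC t (hsub t ht)) (hTR t ht)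
  have hM : ∀ t ∈ Set.Ico T tstar, |m1 t| ≤ c + 1 ∧ |m2 t| ≤ c + 1 ∧ |m3 t| ≤ c + 1 := by
    intro t ht
    have := hC t (hsub t ht)
    refine ⟨abs_le_of_sq_le_sq ?_ (by linarith), abs_le_of_sq_le_sq ?_ (by linarith),
      abs_le_of_sq_le_sq ?_ (by linarith)⟩ <;>
    nlinarith [sq_nonneg (m1 t), sq_nonneg (m2 t), sq_nonneg (m3 t)]
  have hinv : Tendsto (fun t => (xi t)⁻¹) (nhdsWithin tstar (Set.Iio tstar)) (nhds 0) :=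
    tendsto_inv_atTop_zero.comp hcoll
  have hsq : Tendsto (fun t => (Real.sqrt (xi t))⁻¹) (nhdsWithin tstar (Set.Iio tstar)) (nhds 0) :=
    tendsto_inv_atTop_zero.comp (Real.tendsto_sqrt_atTop.comp hcoll)
  have hpu : ∀ t ∈ Set.Ico T tstar, |p t| ≤ 2 * Real.sqrt (xi t) ∧
      |m3 t * xi t| ≤ 2 * Real.sqrt (xi t) := by
    intro t ht
    have h1 := hu t ht
    have h2 := Real.sq_sqrt (show 0 ≤ xi t by linarith [hx1 t ht])
    constructor <;> apply abs_le_of_sq_le_sq _ (by positivity) <;>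
      nlinarith [sq_nonneg (p t), sq_nonneg (m3 t * xi t)]
  have hr1 : ∀ t ∈ Set.Ico T tstar, 1 ≤ Real.sqrt (xi t) := fun t ht =>
    Real.one_le_sqrt.2 (hx1 t ht)
  have hrr : ∀ t ∈ Set.Ico T tstar, Real.sqrt (xi t) * Real.sqrt (xi t) = xi t := fun t ht =>
    Real.mul_self_sqrt (by linarith [hx1 t ht])
  have hm3lim : Tendsto m3 (nhdsWithin tstar (Set.Iio tstar)) (nhds 0) := by
    have h2 := hsq.const_mul 2
    rw [mul_zero] at h2
    refine squeeze_zero_norm' ?_ h2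
    filter_upwards [aux_ev hTs] with t ht
    have h1 := (hpu t ht).2
    have h3 := hr1 t ht
    have h4 := hrr t ht
    rw [abs_mul, abs_of_nonneg (show 0 ≤ xi t by linarith [hx1 t ht])] at h1
    rw [Real.norm_eq_abs, ← div_eq_mul_inv, le_div_iff₀ (by linarith)]
    by_contra! h5
    have h6 := mul_lt_mul_of_pos_right h5 (show 0 < Real.sqrt (xi t) by linarith)
    rw [mul_assoc, h4] at h6
    linarith
  -- the function g
  let g : ℝ → ℝ := fun t => -(2 * p t - m1 t) * (xi t)⁻¹ / 2
  let g' : ℝ → ℝ := fun t => (1 + 1/(xi t)^2) *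
    (-(xi t) - 2*E - m2 t*(m3 t*xi t) - (m1 t)^2/2) + (-(m2 t)^2+(m3 t)^2+2*m2 t*(m3 t*xi t))/2
  have hg : ∀ t ∈ Set.Ico T tstar, HasDerivAt g (g' t) t := by
    intro t ht
    have hx : xi t ≠ 0 := by linarith [hx1 t ht]
    have hs := hsub t ht
    convert! (((((hp t hs).const_mul 2).sub (hm1 t hs)).neg).mul ((hxi t hs).inv hx)).div_const 2
      using 1
    simp only [g', ← hE t hs, Pi.sub_apply, Pi.neg_apply, Pi.inv_apply]
    field_simp
    ring
  have hg' : ∀ t ∈ Set.Ico T tstar, g' t ≤ - xi t / 2 := fun t ht =>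
    aux_g (hE t (hsub t ht)) (hC t (hsub t ht)) (hTR t ht)
  have hglim : Tendsto g (nhdsWithin tstar (Set.Iio tstar)) (nhds 0) := by
    have h2 := hsq.const_mul (2 + (c + 1))
    rw [mul_zero] at h2
    refine squeeze_zero_norm' ?_ h2
    filter_upwards [aux_ev hTs] with t ht
    have h1 := (hpu t ht).1
    have h2 := (hM t ht).1
    have h3 := hr1 t ht
    have h4 := hrr t ht
    have hx := hx1 t ht
    have h5 : |2 * p t - m1 t| ≤ 4 * Real.sqrt (xi t) + (c+1) * Real.sqrt (xi t) := by
      rw [abs_le] at *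
      constructor <;> nlinarith
    simp only [g]
    rw [Real.norm_eq_abs, abs_div, abs_mul, abs_neg, abs_inv, abs_of_nonneg (show 0 ≤ xi t by linarith),
      abs_of_pos (show (0:ℝ) < 2 by norm_num), ← div_eq_mul_inv, ← div_eq_mul_inv, div_div,
      div_le_div_iff₀ (by linarith) (by linarith)]
    have h6 := mul_le_mul_of_nonneg_right h5 (show 0 ≤ Real.sqrt (xi t) by linarith)
    nlinarith
  have hgpos : ∀ t ∈ Set.Ico T tstar, 0 ≤ g t := aux_ge hg
    (fun t ht => by linarith [hg' t ht, hx1 t ht]) hglim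
  have hxig : ∀ t ∈ Set.Ico T tstar, -(2 * p t - m1 t) = 2 * g t * xi t := by
    intro t ht
    have hx : xi t ≠ 0 := by linarith [hx1 t ht]
    simp only [g]
    field_simp
  have hinvd : ∀ t ∈ Set.Ico T tstar, HasDerivAt (fun t => (xi t)⁻¹)
      (-(1 + 1/(xi t)^2) * (2 * g t * xi t)) t := by
    intro t ht
    have hx : xi t ≠ 0 := by linarith [hx1 t ht]
    convert! (hxi t (hsub t ht)).inv hx using 1
    rw [← hxig t ht]
    field_simp
  have hg2 : ∀ t ∈ Set.Ico T tstar, 0 ≤ (g t)^2 - 1/4 * (xi t)⁻¹ := by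
    refine aux_ge (fun t ht => ((hg t ht).pow 2).sub ((hinvd t ht).const_mul (1/4))) ?_ ?_
    · intro t ht
      have h1 := hg' t ht
      have h2 := hgpos t ht
      have h3 := hx1 t ht
      have h4 : 1 / (xi t)^2 ≤ 1 := by
        rw [div_le_one (by positivity)]; nlinarith
      have h5 := mul_le_mul_of_nonneg_left h1 h2
      have h6 : 0 ≤ g t * xi t := by positivity
      have h7 := mul_le_mul_of_nonneg_right h4 h6
      push_cast
      nlinarith
    · have := (hglim.pow 2).sub (hinv.const_mul (1/4))
      simpa using this
  have hq : ∀ t ∈ Set.Ico T tstar, Real.sqrt (xi t) ≤ 2 * g t * xi t := by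
    intro t ht
    have h1 := hg2 t ht
    have h2 := hgpos t ht
    have h3 := hx1 t ht
    apply Real.sqrt_le_iff.2 ⟨by positivity, ?_⟩
    have h4 : (xi t)⁻¹ * xi t = 1 := inv_mul_cancel₀ (by linarith)
    have h5 := mul_nonneg h1 (show 0 ≤ 4 * xi t * xi t by nlinarith)
    have h6 : (xi t)⁻¹ * xi t * xi t = xi t := by rw [h4, one_mul]
    nlinarith
  have hinvle : ∀ t ∈ Set.Ico T tstar,
      -(1 + 1/(xi t)^2) * (2 * g t * xi t) ≤ - Real.sqrt (xi t) := by
    intro t ht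
    have h1 := hq t ht
    have h2 := hr1 t ht
    have h3 : 0 ≤ 1/(xi t)^2 := by positivity
    nlinarith
  have hm3b : ∀ t ∈ Set.Ico T tstar, |m2 t * p t - m1 t * m3 t * xi t|
      ≤ 4 * (c+1) * Real.sqrt (xi t) := by
    intro t ht
    obtain ⟨h1, h2⟩ := hpu t ht
    obtain ⟨h3, h4, -⟩ := hM t ht
    have a1 : |m2 t * p t| ≤ (c+1) * (2 * Real.sqrt (xi t)) := by
      rw [abs_mul]; gcongr
    have a2 : |m1 t * (m3 t * xi t)| ≤ (c+1) * (2 * Real.sqrt (xi t)) := by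
      rw [abs_mul]; gcongr
    rw [abs_le] at *
    constructor <;> nlinarith
  have hub : ∀ t ∈ Set.Ico T tstar, |m3 t * xi t| ≤ 4 * (c+1) := by
    have l1 : ∀ t ∈ Set.Ico T tstar, 0 ≤ m3 t + 4 * (c+1) * (xi t)⁻¹ := by
      refine aux_ge (fun t ht => (hm3 t (hsub t ht)).add ((hinvd t ht).const_mul (4 * (c+1)))) ?_ ?_
      · intro t ht
        have h1 := (abs_le.1 (hm3b t ht)).2
        have h2 := mul_le_mul_of_nonneg_left (hinvle t ht) (show 0 ≤ 4 * (c+1) by linarith)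
        linarith
      · simpa using hm3lim.add (hinv.const_mul (4 * (c+1)))
    have l2 : ∀ t ∈ Set.Ico T tstar, 0 ≤ -m3 t + 4 * (c+1) * (xi t)⁻¹ := by
      refine aux_ge (fun t ht => (hm3 t (hsub t ht)).neg.add ((hinvd t ht).const_mul (4 * (c+1)))) ?_ ?_
      · intro t ht
        have h1 := (abs_le.1 (hm3b t ht)).1
        have h2 := mul_le_mul_of_nonneg_left (hinvle t ht) (show 0 ≤ 4 * (c+1) by linarith)
        linarith
      · simpa using hm3lim.neg.add (hinv.const_mul (4 * (c+1)))
    intro t ht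
    have h3 := hx1 t ht
    have h4 : (xi t)⁻¹ * xi t = 1 := inv_mul_cancel₀ (by linarith)
    have k1 := mul_nonneg (l1 t ht) (show 0 ≤ xi t by linarith)
    have k2 := mul_nonneg (l2 t ht) (show 0 ≤ xi t by linarith)
    rw [add_mul, mul_assoc (4 * (c+1)), h4] at k1 k2
    rw [abs_le]
    constructor <;> linarith
  have hrd : ∀ t ∈ Set.Ico T tstar, ∃ d, HasDerivAt (fun t => (Real.sqrt (xi t))⁻¹) d t ∧
      d ≤ - xi t / 2 := by
    intro t ht
    have h3 := hx1 t ht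
    have hr := hr1 t ht
    have hrr' := hrr t ht
    refine ⟨_, ((hxi t (hsub t ht)).sqrt (by linarith)).inv (by linarith), ?_⟩
    have h1 := hq t ht
    rw [← hxig t ht] at h1
    rw [Real.sq_sqrt (by linarith), div_le_iff₀ (by linarith), neg_le]
    rw [le_div_iff₀ (by linarith)]
    have h5 := mul_le_mul_of_nonneg_left h1 (show 0 ≤ (xi t)^2 + 1 by positivity)
    nlinarith
  choose! d hd hdle using hrd
  have key : ∀ (f f' : ℝ → ℝ), (∀ t ∈ Set.Ico T tstar, HasDerivAt f (f' t) t) →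
      (∀ t ∈ Set.Ico T tstar, |f t| ≤ c + 1) →
      (∀ t ∈ Set.Ico T tstar, f' t ≤ 20 * (c+1)^2 * xi t) →
      ∃ L, Tendsto f (nhdsWithin tstar (Set.Iio tstar)) (nhds L) := by
    intro f f' hf hb hf'
    obtain ⟨L, hL⟩ := aux_conv (B := -(c+1)) hTs
      (fun t ht => (hf t ht).add ((hd t ht).const_mul (40 * (c+1)^2))) (fun t ht => by
        have h1 := mul_le_mul_of_nonneg_left (hdle t ht) (show 0 ≤ 40 * (c+1)^2 by positivity)
        linarith [hf' t ht]) (fun t ht => by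
        have h1 := (abs_le.1 (hb t ht)).1
        have h2 : 0 ≤ 40 * (c+1)^2 * (Real.sqrt (xi t))⁻¹ := by positivity
        simp only [Pi.add_apply]
        linarith)
    refine ⟨L, ?_⟩
    have := hL.sub (hsq.const_mul (40 * (c+1)^2))
    simpa using this
  obtain ⟨L1, hL1⟩ := key m1 _ (fun t ht => hm1 t (hsub t ht)) (fun t ht => (hM t ht).1) (by
    intro t ht
    obtain ⟨h1, h2, h3⟩ := hM t ht
    have hx := hx1 t ht
    have a1 : |m2 t * (m3 t * xi t)| ≤ (c+1) * (4 * (c+1)) := by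
      rw [abs_mul]; gcongr; exact hub t ht
    have a2 : (m3 t)^2 ≤ (c+1)^2 := sq_le_sq.2 (by rwa [abs_of_nonneg (show 0 ≤ c+1 by linarith)])
    have a3 := (abs_le.1 a1).2
    rw [mul_comm]
    apply mul_le_mul_of_nonneg_right _ (by linarith)
    nlinarith [sq_nonneg (m2 t)])
  obtain ⟨L2, hL2⟩ := key m2 _ (fun t ht => hm2 t (hsub t ht)) (fun t ht => (hM t ht).2.1) (by
    intro t ht
    obtain ⟨h1, h2, h3⟩ := hM t ht
    have hx := hx1 t ht
    have hr := hr1 t ht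
    have hr' := hrr t ht
    have a1 : |m1 t * (m3 t * xi t)| ≤ (c+1) * (4 * (c+1)) := by
      rw [abs_mul]; gcongr; exact hub t ht
    have a2 : |m1 t * m2 t| ≤ (c+1) * (c+1) := by
      rw [abs_mul]; gcongr
    have a3 : |m3 t * p t| ≤ (c+1) * (2 * Real.sqrt (xi t)) := by
      rw [abs_mul]; gcongr; exact (hpu t ht).1
    have b1 := mul_le_mul_of_nonneg_right (abs_le.1 a1).1 (show 0 ≤ xi t by linarith)
    have b2 := mul_le_mul_of_nonneg_right (abs_le.1 a2).2 (show 0 ≤ xi t by linarith)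
    have b3 := (abs_le.1 a3).1
    have b4 : Real.sqrt (xi t) ≤ xi t := by nlinarith
    have b5 : (c+1) * Real.sqrt (xi t) ≤ (c+1)^2 * xi t := by
      apply mul_le_mul _ b4 (by linarith) (by positivity)
      nlinarith
    nlinarith)
  refine ⟨L1, L2, ?_, hL1, hL2, hm3lim⟩
  have h1 := ((hL1.pow 2).add (hL2.pow 2)).add (hm3lim.pow 2)
  have h2 : Tendsto (fun t => (m1 t)^2 + (m2 t)^2 + (m3 t)^2) (nhdsWithin tstar (Set.Iio tstar))
      (nhds c) := by
    refine tendsto_const_nhds.congr' ?_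
    filter_upwards [aux_ev ht0] with t ht
    exact (hC t ht).symm
  have h3 := tendsto_nhds_unique h1 h2
  linarith
end
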